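/- Let N be the number of distinct roots of f(X) := X³ + aX + b in F_q, and pick e ∈ F_{q²}^* satisfying e² + be + a³ = 0. Then N ∈ {0, 1, 3}; N = 1 if and only if Tr(a³/b²) ≠ Tr(1); and if N ∈ {0, 3}, then N = 3 if and only if e is a cube in F_{q²}. -/

import Mathlib

open Polynomial

local notation "K" => AlgebraicClosure (ZMod 2)

/-!
Write the roots of `X³ + aX + b` by Cardano's formula as `u + a / u` with `u³ = e`. As
`u + a / u = v + a / v` exactly when `u = v` or `u v = a`, a root is fixed by the Frobenius map `φ`
of `F_q` if and only if `φ u = u` (when `φ e = e`) or `φ u = a / u` (when `φ e = e + b`). Both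
conditions compare two multiplicative maps `φ` and `g` on the three cube roots `ω ^ i u` of `e`:
if `φ ω ≠ g ω` they agree (up to a constant) on exactly one cube root, and if `φ ω = g ω` they agree
on all or none, agreement being then equivalent to `φ (φ u) = u`. Finally `e / b` and `ω` are
Artin–Schreier roots of `a³ / b²` and `1`, so that `Tr(a³ / b²) = φ (e / b) + e / b` and
`Tr(1) = φ ω + ω`.
-/

section TwistedRoots

variable {F : Type*} [Field F]

/-- The `n`-th roots `u` of `e` at which the multiplicative maps `f` and `g` agree up to the
constant `c`. With `f` a Frobenius map and `c * g u` equal to `u` or to `a / u`, these parametrise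
the roots of a cubic that are fixed by `f`. -/
def twistedRoots (f g : F →*₀ F) (c : F) (n : ℕ) (e : F) : Set F :=
  {u | u ^ n = e ∧ f u = c * g u}

variable {f g : F →*₀ F} {c e u v ω : F} {n p : ℕ}

theorem exists_pow_mul_eq_of_pow_eq_pow [NeZero n] (hω : IsPrimitiveRoot ω n) (hu : u ≠ 0)
    (huv : v ^ n = u ^ n) : ∃ i, ω ^ i * u = v := by
  obtain ⟨i, -, hi⟩ := hω.eq_pow_of_pow_eq_one (ξ := v / u) (by
    rw [div_pow, huv, div_self (pow_ne_zero n hu)])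
  exact ⟨i, by rw [hi, div_mul_cancel₀ v hu]⟩

theorem ncard_setOf_pow_eq [NeZero n] (hω : IsPrimitiveRoot ω n) (he : e ≠ 0) (hu : u ^ n = e) :
    {v | v ^ n = e}.ncard = n := by
  classical
  have hset : {v | v ^ n = e} = ↑(nthRoots n e).toFinset := by
    ext v
    simp [mem_nthRoots (NeZero.pos n)]
  rw [hset, Set.ncard_coe_finset, Multiset.toFinset_card_of_nodup (hω.nthRoots_nodup he),
    hω.card_nthRoots, if_pos ⟨u, hu⟩]

theorem twistedRoots_eq_of_mem [NeZero n] (hω : IsPrimitiveRoot ω n) (he : e ≠ 0)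
    (hfg : f ω = g ω) (hu : u ∈ twistedRoots f g c n e) :
    twistedRoots f g c n e = {v | v ^ n = e} := by
  obtain ⟨rfl, hfu⟩ := hu
  refine Set.Subset.antisymm (fun v hv ↦ hv.1) fun v hv ↦ ⟨hv, ?_⟩
  obtain ⟨i, rfl⟩ := exists_pow_mul_eq_of_pow_eq_pow hω (ne_zero_pow (NeZero.ne n) he) hv
  simp only [map_mul, map_pow, hfg, hfu]
  ring

theorem ncard_twistedRoots_of_nonempty [NeZero n] (hω : IsPrimitiveRoot ω n) (he : e ≠ 0)
    (hfg : f ω = g ω) (hne : (twistedRoots f g c n e).Nonempty) :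
    (twistedRoots f g c n e).ncard = n := by
  obtain ⟨u, hu⟩ := hne
  rw [twistedRoots_eq_of_mem hω he hfg hu, ncard_setOf_pow_eq hω he hu.1]

theorem isPrimitiveRoot_map_div_map (hp : p.Prime) (hω : IsPrimitiveRoot ω p)
    (hfg : f ω ≠ g ω) : IsPrimitiveRoot (f ω / g ω) p := by
  have := Fact.mk hp
  have hgω : g ω ≠ 0 := (map_ne_zero g).2 (hω.ne_zero hp.ne_zero)
  refine IsPrimitiveRoot.iff_orderOf.2 (orderOf_eq_prime ?_ ?_)
  · rw [div_pow, ← map_pow, ← map_pow, hω.pow_eq_one, map_one, map_one, div_one]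
  · rwa [Ne, div_eq_one_iff_eq hgω]

theorem twistedRoots_nonempty_of_isPrimitiveRoot_div [NeZero n]
    (hρ : IsPrimitiveRoot (f ω / g ω) n) (hω : ω ^ n = 1) (he : e ≠ 0)
    (hfe : f e = c ^ n * g e) (hu : u ^ n = e) : (twistedRoots f g c n e).Nonempty := by
  subst hu
  have hfu : f u ≠ 0 := (map_ne_zero f).2 (ne_zero_pow (NeZero.ne n) he)
  have hgω : g ω ≠ 0 := (map_ne_zero g).2 (ne_zero_pow (NeZero.ne n) (hω ▸ one_ne_zero))
  have hratio : (c * g u / f u) ^ n = 1 := by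
    rw [div_pow, mul_pow, ← map_pow, ← map_pow, ← hfe, div_self ((map_ne_zero f).2 he)]
  obtain ⟨i, -, hi⟩ := hρ.eq_pow_of_pow_eq_one hratio
  refine ⟨ω ^ i * u, by rw [mul_pow, pow_right_comm, hω, one_pow, one_mul], ?_⟩
  rw [div_pow, div_eq_div_iff (pow_ne_zero i hgω) hfu] at hi
  simp only [map_mul, map_pow]
  linear_combination hi

theorem twistedRoots_subsingleton_of_isPrimitiveRoot_div [NeZero n]
    (hρ : IsPrimitiveRoot (f ω / g ω) n) (hω : IsPrimitiveRoot ω n) (he : e ≠ 0) :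
    (twistedRoots f g c n e).Subsingleton := by
  rintro u ⟨rfl, hfu⟩ v ⟨hv, hfv⟩
  have hu : u ≠ 0 := ne_zero_pow (NeZero.ne n) he
  have hgω : g ω ≠ 0 := (map_ne_zero g).2 (hω.ne_zero (NeZero.ne n))
  obtain ⟨i, rfl⟩ := exists_pow_mul_eq_of_pow_eq_pow hω hu hv
  have hρi : (f ω / g ω) ^ i = 1 := by
    rw [div_pow, div_eq_one_iff_eq (pow_ne_zero i hgω)]
    refine mul_right_cancel₀ ((map_ne_zero f).2 hu) ?_
    simp only [map_mul, map_pow] at hfv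
    linear_combination hfv - g ω ^ i * hfu
  rw [(hω.pow_eq_one_iff_dvd i).2 (hρ.dvd_of_pow_eq_one i hρi), one_mul]

theorem ncard_twistedRoots_of_map_ne (hp : p.Prime) (hω : IsPrimitiveRoot ω p) (he : e ≠ 0)
    (hfe : f e = c ^ p * g e) (hu : u ^ p = e) (hfg : f ω ≠ g ω) :
    (twistedRoots f g c p e).ncard = 1 := by
  have : NeZero p := ⟨hp.ne_zero⟩
  have hρ := isPrimitiveRoot_map_div_map hp hω hfg
  rw [Set.ncard_eq_one, Set.exists_eq_singleton_iff_nonempty_subsingleton]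
  exact ⟨twistedRoots_nonempty_of_isPrimitiveRoot_div hρ hω.pow_eq_one he hfe hu,
    twistedRoots_subsingleton_of_isPrimitiveRoot_div hρ hω he⟩

theorem map_map_eq_iff_map_eq_mul (hn : Odd n) (hω : IsPrimitiveRoot ω n)
    (hgg : ∀ x, g (g x) = x) (hfg : ∀ x, f (g x) = g (f x)) (hfc : f c = c) (hc : c * g c = 1)
    (hu : u ≠ 0) (hfu : f (u ^ n) = c ^ n * g (u ^ n)) (hfω : f ω = g ω) :
    f (f u) = u ↔ f u = c * g u := by
  have : NeZero n := ⟨hn.pos.ne'⟩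
  refine ⟨fun hffu ↦ ?_, fun h ↦ ?_⟩
  · have hcgu : c * g u ≠ 0 := mul_ne_zero (left_ne_zero_of_mul_eq_one hc) ((map_ne_zero g).2 hu)
    -- `r` is a root of unity, so `f r = g r`; since also `f r * g r = 1`, oddness of `n` forces
    -- `r = 1`.
    set r := f u / (c * g u) with hr
    have hrn : r ^ n = 1 := by
      rw [hr, div_pow, mul_pow, ← map_pow, ← map_pow, hfu, map_pow, ← mul_pow,
        div_self (pow_ne_zero n hcgu)]
    obtain ⟨i, -, hi⟩ := hω.eq_pow_of_pow_eq_one hrn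
    have hfr : f r = g r := by rw [← hi, map_pow, map_pow, hfω]
    have hfgr : f r * g r = 1 := by
      have hgfu : g (f u) ≠ 0 := (map_ne_zero g).2 ((map_ne_zero f).2 hu)
      rw [hr, map_div₀, map_div₀, map_mul, map_mul, hffu, hfc, hfg, hgg]
      field_simp
      rw [hc, div_one]
    have hgr : g r = 1 := by
      have hgr2 : g r ^ 2 = 1 := by rw [sq, ← hfgr, hfr]
      have hgrn : g r ^ n = 1 := by rw [← map_pow, hrn, map_one]
      simpa only [hn.coprime_two_left.gcd_eq_one, pow_one] using pow_gcd_eq_one.2 ⟨hgr2, hgrn⟩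
    have hr1 : r = 1 := by rw [← hgg r, hgr, map_one]
    exact (div_eq_one_iff_eq hcgu).1 hr1
  · rw [h, map_mul, hfc, hfg, h, map_mul, hgg, ← mul_assoc, hc, one_mul]

theorem twistedRoots_eq_setOf_map_map_eq (hn : Odd n) (hω : IsPrimitiveRoot ω n) (he : e ≠ 0)
    (hgg : ∀ x, g (g x) = x) (hfg : ∀ x, f (g x) = g (f x)) (hfc : f c = c) (hc : c * g c = 1)
    (hfe : f e = c ^ n * g e) (hfω : f ω = g ω) :
    twistedRoots f g c n e = {u | f (f u) = u ∧ u ^ n = e} := by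
  refine Set.ext fun u ↦ and_comm.trans (and_congr_left fun hu ↦ ?_)
  subst hu
  exact (map_map_eq_iff_map_eq_mul hn hω hgg hfg hfc hc (ne_zero_pow hn.pos.ne' he) hfe hfω).symm

theorem ncard_twistedRoots_trichotomy (hp : p.Prime) (hp2 : p ≠ 2) (hω : IsPrimitiveRoot ω p)
    (he : e ≠ 0) (hgg : ∀ x, g (g x) = x) (hfg : ∀ x, f (g x) = g (f x)) (hfc : f c = c)
    (hc : c * g c = 1) (hfe : f e = c ^ p * g e) (hu : u ^ p = e) {N : ℕ}
    (hN : N = (twistedRoots f g c p e).ncard) :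
    N ∈ ({0, 1, p} : Set ℕ) ∧ (N = 1 ↔ f ω ≠ g ω) ∧
      (N = 0 ∨ N = p → (N = p ↔ ∃ y, f (f y) = y ∧ y ^ p = e)) := by
  have : NeZero p := ⟨hp.ne_zero⟩
  by_cases hfω : f ω = g ω
  · have hex : (∃ y, f (f y) = y ∧ y ^ p = e) ↔ (twistedRoots f g c p e).Nonempty := by
      rw [twistedRoots_eq_setOf_map_map_eq (hp.odd_of_ne_two hp2) hω he hgg hfg hfc hc hfe hfω]
      rfl
    rw [hex]
    rcases (twistedRoots f g c p e).eq_empty_or_nonempty with hempty | hne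
    · rw [hempty, Set.ncard_empty] at hN
      simp [hN, hempty, hfω, hp.ne_zero.symm]
    · rw [ncard_twistedRoots_of_nonempty hω he hfω hne] at hN
      simp [hN, hne, hfω, hp.ne_one]
  · rw [ncard_twistedRoots_of_map_ne hp hω he hfe hu hfω] at hN
    simp [hN, hfω, hp.ne_one.symm]

end TwistedRoots

section Cardano

theorem cardano_factorization {R : Type*} [CommRing R] {ω : R} (hω : ω ^ 2 + ω + 1 = 0)
    (x y z : R) :
    x ^ 3 - 3 * (y * z) * x - (y ^ 3 + z ^ 3) =
      (x - (y + z)) * (x - (ω * y + ω ^ 2 * z)) * (x - (ω ^ 2 * y + ω * z)) := by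
  grind

theorem sq_add_self_add_one_eq_zero {R : Type*} [CommRing R] [IsDomain R] {ω : R}
    (hω : IsPrimitiveRoot ω 3) : ω ^ 2 + ω + 1 = 0 := by
  have h := hω.geom_sum_eq_zero (by norm_num)
  simp only [Finset.sum_range_succ, Finset.sum_range_zero] at h
  linear_combination h

variable {F : Type*} [Field F]

/-- Cardano's expression `u + a / u`: a root of `X³ - 3aX - (u³ + a³ / u³)`, which in
characteristic two is `X³ + aX + b` when `e = u³` satisfies `e² + be + a³ = 0`. -/
def cardanoSum (a u : F) : F :=
  u + a / u

/-- The roots of `X³ + aX + b` in the fixed field of `φ`. -/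
def fixedCubicRoots (φ : F →+* F) (a b : F) : Set F :=
  {x | φ x = x ∧ x ^ 3 + a * x + b = 0}

variable {a b e u v ω : F} {φ : F →+* F}

theorem cardanoSum_eq_cardanoSum_iff (hu : u ≠ 0) (hv : v ≠ 0) :
    cardanoSum a u = cardanoSum a v ↔ u = v ∨ u * v = a := by
  have hdiff : (cardanoSum a u - cardanoSum a v) * (u * v) = (u - v) * (u * v - a) := by
    unfold cardanoSum
    field_simp
    ring
  rw [← sub_eq_zero, ← mul_left_inj' (mul_ne_zero hu hv), zero_mul, hdiff, mul_eq_zero,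
    sub_eq_zero, sub_eq_zero]

theorem map_cardanoSum (ha : φ a = a) :
    φ (cardanoSum a u) = cardanoSum a (φ u) := by
  rw [cardanoSum, map_add, map_div₀, ha, cardanoSum]

theorem cardanoSum_injOn (he : e ≠ 0) (hea : e ^ 2 ≠ a ^ 3) :
    Set.InjOn (cardanoSum a) {u | u ^ 3 = e} := by
  rintro u rfl v hv huv
  have hu : u ≠ 0 := ne_zero_pow three_ne_zero he
  have hv0 : v ≠ 0 := ne_zero_pow three_ne_zero (hv ▸ he)
  refine ((cardanoSum_eq_cardanoSum_iff hu hv0).1 huv).resolve_right fun huva ↦ hea ?_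
  rw [← huva, mul_pow, hv, sq]

theorem cardanoSum_map_eq_iff_of_map_eq (hφe : φ e = e) (he0 : e ≠ 0) (hea : e ^ 2 ≠ a ^ 3)
    (hv : v ^ 3 = e) : cardanoSum a (φ v) = cardanoSum a v ↔ φ v = v := by
  have hv0 : v ≠ 0 := ne_zero_pow three_ne_zero (hv ▸ he0)
  rw [cardanoSum_eq_cardanoSum_iff ((map_ne_zero φ).2 hv0) hv0, or_iff_left]
  intro hφv
  apply hea
  rw [← hφv, mul_pow, ← map_pow, hv, hφe, sq]

theorem cardanoSum_map_eq_iff_of_map_ne (hφe : φ e ≠ e) (he0 : e ≠ 0) (hv : v ^ 3 = e) :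
    cardanoSum a (φ v) = cardanoSum a v ↔ φ v = a * v⁻¹ := by
  have hv0 : v ≠ 0 := ne_zero_pow three_ne_zero (hv ▸ he0)
  rw [cardanoSum_eq_cardanoSum_iff ((map_ne_zero φ).2 hv0) hv0, or_iff_right,
    eq_mul_inv_iff_mul_eq₀ hv0]
  intro hφv
  apply hφe
  rw [← hv, map_pow, hφv]

variable [CharP F 2]

theorem sq_ne_cube_of_resolvent (hb : b ≠ 0) (he0 : e ≠ 0) (he : e ^ 2 + b * e + a ^ 3 = 0) :
    e ^ 2 ≠ a ^ 3 := by
  intro hea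
  refine mul_ne_zero hb he0 ?_
  linear_combination he + hea - e ^ 2 * CharTwo.two_eq_zero (R := F)

theorem cubic_eq_prod_sub_cardanoSum (hω : IsPrimitiveRoot ω 3) (he0 : e ≠ 0)
    (he : e ^ 2 + b * e + a ^ 3 = 0) (hu : u ^ 3 = e) (x : F) :
    x ^ 3 + a * x + b = (x - cardanoSum a u) * (x - cardanoSum a (ω * u)) *
      (x - cardanoSum a (ω ^ 2 * u)) := by
  have htwo : (2 : F) = 0 := CharTwo.two_eq_zero
  have hu0 : u ≠ 0 := ne_zero_pow three_ne_zero (hu ▸ he0)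
  have hω0 : ω ≠ 0 := hω.ne_zero three_ne_zero
  have hω3 : ω ^ 3 = 1 := hω.pow_eq_one
  have hsum : u ^ 3 + (a / u) ^ 3 = b := by
    rw [div_pow, hu]
    field_simp
    linear_combination he - b * e * htwo
  have hω₁ : cardanoSum a (ω * u) = ω * u + ω ^ 2 * (a / u) := by
    unfold cardanoSum
    field_simp
    linear_combination -a * hω3
  have hω₂ : cardanoSum a (ω ^ 2 * u) = ω ^ 2 * u + ω * (a / u) := by
    unfold cardanoSum
    field_simp
    linear_combination -a * hω3
  rw [hω₁, hω₂, cardanoSum, ← cardano_factorization (sq_add_self_add_one_eq_zero hω), hsum,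
    mul_div_cancel₀ a hu0]
  linear_combination (2 * a * x + b) * htwo

theorem setOf_cubic_eq_zero_eq_image_cardanoSum (hω : IsPrimitiveRoot ω 3) (he0 : e ≠ 0)
    (he : e ^ 2 + b * e + a ^ 3 = 0) (hu : u ^ 3 = e) :
    {x | x ^ 3 + a * x + b = 0} = cardanoSum a '' {v | v ^ 3 = e} := by
  refine Set.Subset.antisymm (fun x (hx : x ^ 3 + a * x + b = 0) ↦ ?_) ?_
  · have hcube (i : ℕ) : (ω ^ i * u) ^ 3 = e := by
      rw [mul_pow, pow_right_comm, hω.pow_eq_one, one_pow, one_mul, hu]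
    rw [cubic_eq_prod_sub_cardanoSum hω he0 he hu, mul_eq_zero, mul_eq_zero, sub_eq_zero,
      sub_eq_zero, sub_eq_zero] at hx
    rcases hx with (rfl | rfl) | rfl
    · exact Set.mem_image_of_mem _ hu
    · exact Set.mem_image_of_mem _ (by simpa using hcube 1)
    · exact Set.mem_image_of_mem _ (hcube 2)
  · rintro _ ⟨v, hv, rfl⟩
    exact (cubic_eq_prod_sub_cardanoSum hω he0 he hv _).trans (by rw [sub_self, zero_mul, zero_mul])

theorem ncard_fixedCubicRoots_eq_ncard_twistedRoots {g : F →*₀ F} {c : F}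
    (hω : IsPrimitiveRoot ω 3) (hb : b ≠ 0) (he0 : e ≠ 0) (he : e ^ 2 + b * e + a ^ 3 = 0)
    (hu : u ^ 3 = e) (ha : φ a = a)
    (hg : ∀ v, v ^ 3 = e → (cardanoSum a (φ v) = cardanoSum a v ↔ φ v = c * g v)) :
    (fixedCubicRoots φ a b).ncard = (twistedRoots φ.toMonoidWithZeroHom g c 3 e).ncard := by
  have himage : fixedCubicRoots φ a b =
      cardanoSum a '' twistedRoots φ.toMonoidWithZeroHom g c 3 e := by
    change {x | φ x = x} ∩ {x | x ^ 3 + a * x + b = 0} = _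
    rw [setOf_cubic_eq_zero_eq_image_cardanoSum hω he0 he hu, Set.inter_comm,
      ← Set.image_inter_preimage]
    congr 1
    refine Set.ext fun v ↦ and_congr_right fun hv ↦ ?_
    change φ (cardanoSum a v) = cardanoSum a v ↔ _
    rw [map_cardanoSum ha, hg v hv]
    rfl
  rw [himage, Set.InjOn.ncard_image]
  exact (cardanoSum_injOn he0 (sq_ne_cube_of_resolvent hb he0 he)).mono fun v hv ↦ hv.1

theorem map_eq_or_map_eq_add_of_resolvent (ha : φ a = a) (hb : φ b = b)
    (he : e ^ 2 + b * e + a ^ 3 = 0) : φ e = e ∨ φ e = e + b := by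
  have hφ : φ e ^ 2 + b * φ e + a ^ 3 = 0 := by
    simpa only [map_add, map_mul, map_pow, map_zero, ha, hb] using congrArg φ he
  have hprod : (φ e - e) * (φ e - (e + b)) = 0 := by
    linear_combination hφ - he +
      (e ^ 2 + e * b - φ e * e - φ e * b) * CharTwo.two_eq_zero (R := F)
  simpa only [mul_eq_zero, sub_eq_zero] using hprod

theorem ncard_fixedCubicRoots_trichotomy_of_map_eq (hω : IsPrimitiveRoot ω 3) (hb : b ≠ 0)
    (he0 : e ≠ 0) (he : e ^ 2 + b * e + a ^ 3 = 0) (hu : u ^ 3 = e) (ha : φ a = a)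
    (hφe : φ e = e) {N : ℕ} (hN : N = (fixedCubicRoots φ a b).ncard) :
    N ∈ ({0, 1, 3} : Set ℕ) ∧ (N = 1 ↔ φ ω ≠ ω) ∧
      (N = 0 ∨ N = 3 → (N = 3 ↔ ∃ y, φ (φ y) = y ∧ y ^ 3 = e)) := by
  have hea := sq_ne_cube_of_resolvent hb he0 he
  rw [ncard_fixedCubicRoots_eq_ncard_twistedRoots (g := .id F) (c := 1) hω hb he0 he hu ha
    fun v hv ↦ by simpa using cardanoSum_map_eq_iff_of_map_eq hφe he0 hea hv] at hN
  exact ncard_twistedRoots_trichotomy (f := φ.toMonoidWithZeroHom) (g := .id F) Nat.prime_three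
    (by norm_num) hω he0 (fun _ ↦ rfl) (fun _ ↦ rfl) (map_one φ) (mul_one 1) (by simpa using hφe)
    hu hN

theorem ncard_fixedCubicRoots_trichotomy_of_map_eq_add (hω : IsPrimitiveRoot ω 3) (hb : b ≠ 0)
    (he0 : e ≠ 0) (he : e ^ 2 + b * e + a ^ 3 = 0) (hu : u ^ 3 = e) (ha : φ a = a)
    (hφe : φ e = e + b) {N : ℕ} (hN : N = (fixedCubicRoots φ a b).ncard) :
    N ∈ ({0, 1, 3} : Set ℕ) ∧ (N = 1 ↔ φ ω ≠ ω⁻¹) ∧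
      (N = 0 ∨ N = 3 → (N = 3 ↔ ∃ y, φ (φ y) = y ∧ y ^ 3 = e)) := by
  have hmul : φ e * e = a ^ 3 := by
    rw [hφe]
    linear_combination he - a ^ 3 * CharTwo.two_eq_zero (R := F)
  have ha0 : a ≠ 0 := ne_zero_pow three_ne_zero (hmul ▸ mul_ne_zero ((map_ne_zero φ).2 he0) he0)
  have hne : φ e ≠ e := by simpa [hφe] using hb
  rw [ncard_fixedCubicRoots_eq_ncard_twistedRoots (g := invMonoidWithZeroHom) (c := a) hω hb he0 he
    hu ha fun v hv ↦ cardanoSum_map_eq_iff_of_map_ne hne he0 hv] at hN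
  exact ncard_twistedRoots_trichotomy (f := φ.toMonoidWithZeroHom) Nat.prime_three (by norm_num) hω
    he0 inv_inv (map_inv₀ φ) ha (mul_inv_cancel₀ ha0) ((eq_mul_inv_iff_mul_eq₀ he0).2 hmul) hu hN

theorem ncard_fixedCubicRoots_trichotomy (hω : IsPrimitiveRoot ω 3) (hb0 : b ≠ 0)
    (he0 : e ≠ 0) (he : e ^ 2 + b * e + a ^ 3 = 0) (hu : u ^ 3 = e) (ha : φ a = a) (hb : φ b = b)
    {N : ℕ} (hN : N = (fixedCubicRoots φ a b).ncard) :
    N ∈ ({0, 1, 3} : Set ℕ) ∧ (N = 1 ↔ φ (e / b) + e / b ≠ φ ω + ω) ∧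
      (N = 0 ∨ N = 3 → (N = 3 ↔ ∃ y, φ (φ y) = y ∧ y ^ 3 = e)) := by
  rcases map_eq_or_map_eq_add_of_resolvent ha hb he with hφe | hφe
  · have hsum : φ (e / b) + e / b = 0 := by
      rw [map_div₀, hφe, hb, CharTwo.add_self_eq_zero]
    rw [hsum, ne_comm, Ne, CharTwo.add_eq_zero]
    exact ncard_fixedCubicRoots_trichotomy_of_map_eq hω hb0 he0 he hu ha hφe hN
  · have hsum : φ (e / b) + e / b = 1 := by
      rw [map_div₀, hφe, hb, add_div, div_self hb0, add_right_comm, CharTwo.add_self_eq_zero,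
        zero_add]
    have hωinv : ω⁻¹ = 1 + ω := by
      refine inv_eq_of_mul_eq_one_right ?_
      linear_combination sq_add_self_add_one_eq_zero hω - CharTwo.two_eq_zero (R := F)
    rw [hsum, ne_comm, Ne, CharTwo.add_eq_iff_eq_add, ← hωinv]
    exact ncard_fixedCubicRoots_trichotomy_of_map_eq_add hω hb0 he0 he hu ha hφe hN

end Cardano

theorem sum_pow_two_pow_eq_of_sq_add_self_eq {R : Type*} [CommRing R] [CharP R 2] {t c : R}
    (ht : t ^ 2 + t = c) (m : ℕ) :
    ∑ i ∈ Finset.range m, c ^ 2 ^ i = t ^ 2 ^ m + t := by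
  have hstep (i : ℕ) : c ^ 2 ^ i = t ^ 2 ^ (i + 1) - t ^ 2 ^ i := by
    rw [← ht, add_pow_char_pow, ← pow_mul, ← pow_succ', CharTwo.sub_eq_add]
  simp only [hstep]
  rw [Finset.sum_range_sub (fun i ↦ t ^ 2 ^ i), pow_zero, pow_one, CharTwo.sub_eq_add]

theorem williams_cubic_general {F : Type*} [Field F] [CharP F 2] [IsSepClosed F] (m : ℕ)
    {a b e : F} (ha : a ^ 2 ^ m = a) (hb : b ^ 2 ^ m = b) (hb0 : b ≠ 0) (he0 : e ≠ 0)
    (he : e ^ 2 + b * e + a ^ 3 = 0) {N : ℕ}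
    (hN : N = {x : F | x ^ 2 ^ m = x ∧ x ^ 3 + a * x + b = 0}.ncard) :
    N ∈ ({0, 1, 3} : Set ℕ) ∧
    (N = 1 ↔ ∑ i ∈ Finset.range m, (a ^ 3 / b ^ 2) ^ 2 ^ i ≠ (m : F)) ∧
    ((N = 0 ∨ N = 3) → (N = 3 ↔ ∃ y : F, y ^ (2 ^ m) ^ 2 = y ∧ y ^ 3 = e)) := by
  have htwo : (2 : F) = 0 := CharTwo.two_eq_zero
  have : NeZero ((3 : ℕ) : F) := ⟨by
    rw [Ne, CharP.cast_eq_zero_iff F 2]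
    norm_num⟩
  obtain ⟨ω, hω⟩ := HasEnoughRootsOfUnity.exists_primitiveRoot F 3
  obtain ⟨u, hu⟩ := IsSepClosed.exists_pow_nat_eq e 3
  have htrace_div := sum_pow_two_pow_eq_of_sq_add_self_eq (t := e / b) (c := a ^ 3 / b ^ 2) (by
    field_simp
    linear_combination he - a ^ 3 * htwo) m
  have htrace_one := sum_pow_two_pow_eq_of_sq_add_self_eq (t := ω) (c := 1) (by
    linear_combination sq_add_self_add_one_eq_zero hω - htwo) m
  simp only [one_pow, Finset.sum_const, Finset.card_range, nsmul_one] at htrace_one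
  rw [htrace_div, htrace_one]
  simp only [sq (2 ^ m), pow_mul]
  exact ncard_fixedCubicRoots_trichotomy (φ := iterateFrobenius F 2 m) hω hb0 he0 he hu ha hb hN

/-- Lemma 2.4 (Williams): for `q = 2^m`, `a ∈ F_q`, `b ∈ F_q^*`, the number `N` of distinct
roots of `X³ + aX + b` in `F_q` lies in `{0,1,3}`; `N = 1` iff `Tr(a³/b²) ≠ Tr(1)`; and
if `N ∈ {0,3}` then `N = 3` iff `e` is a cube in `F_{q²}`, where `e² + be + a³ = 0`, `e ≠ 0`. -/
theorem williams_cubic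
    (m : ℕ) (hm : 0 < m) (q : ℕ) (hq : q = 2 ^ m)
    (a b : K) (haq : a ^ q = a) (hbq : b ^ q = b) (hb : b ≠ 0)
    (e : K) (he0 : e ≠ 0) (heF : e ^ q ^ 2 = e) (he : e ^ 2 + b * e + a ^ 3 = 0)
    (N : ℕ) (hN : N = {x : K | x ^ q = x ∧ x ^ 3 + a * x + b = 0}.ncard) :
    N ∈ ({0, 1, 3} : Set ℕ) ∧
    (N = 1 ↔ ∑ i ∈ Finset.range m, (a ^ 3 / b ^ 2) ^ 2 ^ i ≠ (m : K)) ∧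
    ((N = 0 ∨ N = 3) → (N = 3 ↔ ∃ y : K, y ^ q ^ 2 = y ∧ y ^ 3 = e)) := by
  subst hq
  exact williams_cubic_general m haq hbq hb he0 he hN
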